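/- Let k ≥ 1, let c be a point of ℝ² and v : Fin (k+1) → ℝ² points with v i ≠ c for all i, and suppose the fan with center c and nodes v 0, …, v k is unfolded, i.e. ∑_{i=0}^{k−1} angle(v i − c, v (i+1) − c) = angle(v 0 − c, v k − c). Then for every D ∈ ℕ and all points qc, q 0, …, q k in EuclideanSpace ℝ (Fin D) satisfying ‖q i − qc‖ = ‖v i − c‖ for all i ≤ k and ‖q (i+1) − q i‖ = ‖v (i+1) − v i‖ for all i < k, one has ‖q k − q 0‖ ≤ ‖v k − v 0‖. (In an unfolded fan, the distance between the two neighbors of the center is the global maximum over all configurations, in every dimension, with the given edge lengths.) -/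

import Mathlib

/-!
An edge between consecutive nodes and the two edges to the center form a triangle with prescribed
side lengths, so the angle at the center is the same in every configuration
(`angle_eq_of_norm_eq`). By the triangle inequality for angles
(`angle_zero_last_le_sum_angle`), the angle between the first and last nodes of any configuration
is at most the sum of these angles. For the unfolded fan that sum is exactly the angle between
`v 0` and `v k`. With the lengths of the two outer spokes fixed, the law of cosines makes the
distance between their ends increasing in the angle on `[0, π]`
(`norm_sub_le_norm_sub_of_angle_le`), which gives the bound.
-/

open InnerProductGeometry

/-- Side-side-side: the angle between two vectors is determined by their norms and the norm of
their difference. -/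
lemma angle_eq_of_norm_eq {V W : Type*}
    [NormedAddCommGroup V] [InnerProductSpace ℝ V] [NormedAddCommGroup W] [InnerProductSpace ℝ W]
    {x y : V} {x' y' : W} (hx : ‖x‖ = ‖x'‖) (hy : ‖y‖ = ‖y'‖) (hxy : ‖x - y‖ = ‖x' - y'‖) :
    angle x y = angle x' y' := by
  unfold InnerProductGeometry.angle
  rw [real_inner_eq_norm_mul_self_add_norm_mul_self_sub_norm_sub_mul_self_div_two,
    real_inner_eq_norm_mul_self_add_norm_mul_self_sub_norm_sub_mul_self_div_two, hx, hy, hxy]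

/-- Hinge inequality: with two side lengths fixed, the third side grows with the angle
between them. -/
lemma norm_sub_le_norm_sub_of_angle_le {V W : Type*}
    [NormedAddCommGroup V] [InnerProductSpace ℝ V] [NormedAddCommGroup W] [InnerProductSpace ℝ W]
    {x y : V} {x' y' : W} (hx : ‖x‖ = ‖x'‖) (hy : ‖y‖ = ‖y'‖) (h : angle x y ≤ angle x' y') :
    ‖x - y‖ ≤ ‖x' - y'‖ := by
  have hcos : Real.cos (angle x' y') ≤ Real.cos (angle x y) :=
    Real.cos_le_cos_of_nonneg_of_le_pi (angle_nonneg x y) (angle_le_pi x' y') h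
  have h1 := norm_sub_sq_eq_norm_sq_add_norm_sq_sub_two_mul_norm_mul_norm_mul_cos_angle x y
  have h2 := norm_sub_sq_eq_norm_sq_add_norm_sq_sub_two_mul_norm_mul_norm_mul_cos_angle x' y'
  rw [hx, hy] at h1
  have h3 := mul_le_mul_of_nonneg_left hcos (mul_nonneg (norm_nonneg x') (norm_nonneg y'))
  refine abs_le_of_sq_le_sq' ?_ (norm_nonneg _) |>.2
  nlinarith

/-- Iterated triangle inequality for angles. The first vector must be nonzero, since
`angle 0 0 = π / 2` by convention, while the sum is empty for `k = 0`. -/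
lemma angle_zero_last_le_sum_angle {V : Type*} [NormedAddCommGroup V] [InnerProductSpace ℝ V]
    (k : ℕ) (u : Fin (k + 1) → V) (hu : u 0 ≠ 0) :
    angle (u 0) (u (Fin.last k)) ≤ ∑ i : Fin k, angle (u i.castSucc) (u i.succ) := by
  induction k with
  | zero => simp [angle_self hu]
  | succ k ih =>
    rw [Fin.sum_univ_castSucc]
    have h1 := ih (fun i => u i.castSucc) hu
    have h2 := angle_le_angle_add_angle (u 0) (u (Fin.last k).castSucc) (u (Fin.last (k + 1)))
    exact h2.trans (add_le_add_left h1 _)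

/-- In an unfolded planar fan with center `c` and nodes `v 0, …, v k`, the
distance between the two neighbors `v 0` and `v k` of the center is the global
maximum over all configurations, in every dimension, with the given edge
lengths. -/
theorem unfolded_fan_max_neighbor_distance
    (k : ℕ) (hk : 1 ≤ k) (c : EuclideanSpace ℝ (Fin 2))
    (v : Fin (k + 1) → EuclideanSpace ℝ (Fin 2))
    (hv : ∀ i, v i ≠ c)
    (hunfolded : ∑ i : Fin k, angle (v i.castSucc - c) (v i.succ - c)
      = angle (v 0 - c) (v (Fin.last k) - c)) :
    ∀ (D : ℕ) (qc : EuclideanSpace ℝ (Fin D))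
      (q : Fin (k + 1) → EuclideanSpace ℝ (Fin D)),
      (∀ i, ‖q i - qc‖ = ‖v i - c‖) →
      (∀ i : Fin k, ‖q i.succ - q i.castSucc‖ = ‖v i.succ - v i.castSucc‖) →
      ‖q (Fin.last k) - q 0‖ ≤ ‖v (Fin.last k) - v 0‖ := by
  intro D qc q hq hqq
  have hne : q 0 - qc ≠ 0 := by
    rw [← norm_ne_zero_iff, hq 0, norm_ne_zero_iff]
    exact sub_ne_zero.2 (hv 0)
  have hang : ∀ i : Fin k, angle (q i.castSucc - qc) (q i.succ - qc)
      = angle (v i.castSucc - c) (v i.succ - c) := fun i =>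
    angle_eq_of_norm_eq (hq _) (hq _) (by
      rw [sub_sub_sub_cancel_right, sub_sub_sub_cancel_right, norm_sub_rev, hqq i, norm_sub_rev])
  have hle := angle_zero_last_le_sum_angle k (fun i => q i - qc) hne
  simp only [hang] at hle
  rw [hunfolded] at hle
  have h := norm_sub_le_norm_sub_of_angle_le (hq 0) (hq (Fin.last k)) hle
  rw [sub_sub_sub_cancel_right, sub_sub_sub_cancel_right] at h
  rwa [norm_sub_rev, norm_sub_rev (v (Fin.last k))]
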